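/- Under the stated conditions, assume additionally that log(p/p₀) is P₀-integrable and set m := ∫ log(p/p₀) dP₀. Then for every real k ≥ 2 one has ∫ |log(p/p₀) − m|^k dP₀ ≤ 2^{2k−1} Γ(k+1) (2 + M) · h(p,p₀)², where Γ denotes the Gamma function. -/

import Mathlib

/-!
Write `r = √(p / p₀)`. Where `r⁻¹ ≤ 3/2`, the Bernstein integrand of `log r` is at most `(r - 1)²`.
On the tail `r⁻¹ ≥ 1 + δ`, with `δ = 1 / (2c)`, it is at most `(r - 1)² + (r⁻¹ - 1) - δ`, and
`2 (r⁻¹ - 1) = 2 (1 - r) r⁻¹ ≤ M (r - 1)² + M⁻¹ r⁻²` by AM-GM. With this choice of weights the tail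
condition says exactly that `-2δ` absorbs `M⁻¹ r⁻²` after integration, so the squared Bernstein norm
of `½ log (p / p₀)` is at most `(2 + M) h²`.

Moments are controlled by the Bernstein norm through `xᵏ ≤ Γ(k + 1) (eˣ - 1 - x)`, which follows by
integrating `xᵏ + sᵏ + k x sᵏ⁻¹ ≤ (x + s)ᵏ` against `e⁻ˢ ds`. Centering costs a factor `2ᵏ` by
Minkowski's inequality, and undoing the factor `½` costs another `2ᵏ`.
-/

open MeasureTheory Real ENNReal

theorem rpow_add_rpow_add_mul_rpow_le_add_rpow {k s x : ℝ} (hk : 2 ≤ k) (hs : 0 ≤ s)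
    (hx : 0 ≤ x) : x ^ k + s ^ k + k * x * s ^ (k - 1) ≤ (x + s) ^ k := by
  have hderiv (y : ℝ) :
      HasDerivAt (fun y ↦ (y + s) ^ k - y ^ k - k * y * s ^ (k - 1))
        (k * (y + s) ^ (k - 1) - k * y ^ (k - 1) - k * s ^ (k - 1)) y := by
    have hadd := ((hasDerivAt_id y).add_const s).rpow_const (p := k) (.inr (by linarith))
    have hpow := Real.hasDerivAt_rpow_const (x := y) (p := k) (.inr (by linarith))
    have hlin := ((hasDerivAt_id y).const_mul k).mul_const (s ^ (k - 1))
    simpa [Pi.sub_def] using (hadd.sub hpow).sub hlin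
  have hmono : MonotoneOn (fun y ↦ (y + s) ^ k - y ^ k - k * y * s ^ (k - 1)) (Set.Ici 0) := by
    refine monotoneOn_of_deriv_nonneg (convex_Ici 0)
      (fun y _ ↦ (hderiv y).continuousAt.continuousWithinAt)
      (fun y _ ↦ (hderiv y).differentiableAt.differentiableWithinAt) fun y hy ↦ ?_
    have hy : 0 ≤ y := interior_subset hy
    have hsuper := Real.add_rpow_le_rpow_add hy hs (show 1 ≤ k - 1 by linarith)
    rw [(hderiv y).deriv]
    nlinarith
  have := hmono Set.self_mem_Ici hx hx
  simp only [zero_add, Real.zero_rpow (show k ≠ 0 by linarith), mul_zero, zero_mul] at this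
  linarith

theorem integrableOn_exp_neg_mul_add_rpow {k x : ℝ} (hk : -1 < k) (hx : 0 ≤ x) :
    IntegrableOn (fun s ↦ Real.exp (-s) * (s + x) ^ k) (Set.Ioi 0) := by
  have htail : IntegrableOn (fun t ↦ Real.exp (-t) * t ^ k) (Set.Ioi x) := by
    simpa using (Real.GammaIntegral_convergent (s := k + 1) (by linarith)).mono_set
      (Set.Ioi_subset_Ioi hx)
  have hshift := ((measurePreserving_add_right volume x).integrableOn_comp_preimage
    (measurableEmbedding_addRight x)).2 htail
  rw [Set.preimage_add_const_Ioi, sub_self] at hshift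
  have hscaled : IntegrableOn (fun s ↦ Real.exp x * (Real.exp (-(s + x)) * (s + x) ^ k))
      (Set.Ioi 0) := hshift.const_mul _
  simpa [← mul_assoc, ← Real.exp_add] using hscaled

theorem integral_exp_neg_mul_add_rpow_le {k x : ℝ} (hk : -1 < k) (hx : 0 ≤ x) :
    ∫ s in Set.Ioi 0, Real.exp (-s) * (s + x) ^ k ≤ Real.exp x * Real.Gamma (k + 1) := by
  have hconv := Real.GammaIntegral_convergent (s := k + 1) (by linarith)
  have hshift := (measurePreserving_add_right volume x).setIntegral_preimage_emb
    (measurableEmbedding_addRight x) (fun t ↦ Real.exp (-t) * t ^ k) (Set.Ioi x)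
  rw [Set.preimage_add_const_Ioi, sub_self] at hshift
  rw [add_sub_cancel_right] at hconv
  calc ∫ s in Set.Ioi 0, Real.exp (-s) * (s + x) ^ k
    _ = ∫ s in Set.Ioi 0, Real.exp x * (Real.exp (-(s + x)) * (s + x) ^ k) := by
      simp [← mul_assoc, ← Real.exp_add]
    _ = Real.exp x * ∫ t in Set.Ioi x, Real.exp (-t) * t ^ k := by
      rw [integral_const_mul, hshift]
    _ ≤ Real.exp x * ∫ t in Set.Ioi 0, Real.exp (-t) * t ^ k := by
      gcongr ?_ * ?_
      refine setIntegral_mono_set hconv ?_ (Set.Ioi_subset_Ioi hx).eventuallyLE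
      filter_upwards [ae_restrict_mem measurableSet_Ioi] with t ht
      exact mul_nonneg (Real.exp_nonneg _) (Real.rpow_nonneg (le_of_lt ht) _)
    _ = Real.exp x * Real.Gamma (k + 1) := by
      rw [Real.Gamma_eq_integral (by linarith), add_sub_cancel_right]

theorem rpow_le_Gamma_mul_exp_sub_one_sub {k x : ℝ} (hk : 2 ≤ k) (hx : 0 ≤ x) :
    x ^ k ≤ Real.Gamma (k + 1) * (Real.exp x - 1 - x) := by
  have hconst : IntegrableOn (fun s ↦ Real.exp (-s) * x ^ k) (Set.Ioi 0) :=
    (integrableOn_exp_neg_Ioi 0).mul_const _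
  have hpow : IntegrableOn (fun s ↦ Real.exp (-s) * s ^ k) (Set.Ioi 0) := by
    simpa using Real.GammaIntegral_convergent (s := k + 1) (by linarith)
  have hlin : IntegrableOn (fun s ↦ k * x * (Real.exp (-s) * s ^ (k - 1))) (Set.Ioi 0) :=
    (Real.GammaIntegral_convergent (by linarith)).const_mul _
  have hsum : IntegrableOn (fun s ↦ Real.exp (-s) * x ^ k + Real.exp (-s) * s ^ k)
      (Set.Ioi 0) := hconst.add hpow
  have hGamma : Real.Gamma (k + 1) = ∫ s in Set.Ioi 0, Real.exp (-s) * s ^ k := by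
    rw [Real.Gamma_eq_integral (by linarith), add_sub_cancel_right]
  have hlower : x ^ k + Real.Gamma (k + 1) + x * Real.Gamma (k + 1) ≤
      Real.exp x * Real.Gamma (k + 1) := calc
    x ^ k + Real.Gamma (k + 1) + x * Real.Gamma (k + 1)
    _ = x ^ k + Real.Gamma (k + 1) + k * x * Real.Gamma k := by
      rw [Real.Gamma_add_one (by linarith)]
      ring
    _ = ∫ s in Set.Ioi 0, (Real.exp (-s) * x ^ k + Real.exp (-s) * s ^ k +
          k * x * (Real.exp (-s) * s ^ (k - 1))) := by
      rw [integral_add hsum hlin, integral_add hconst hpow, integral_mul_const,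
        integral_exp_neg_Ioi_zero, one_mul, integral_const_mul, hGamma,
        Real.Gamma_eq_integral (by linarith)]
    _ ≤ ∫ s in Set.Ioi 0, Real.exp (-s) * (s + x) ^ k := by
      refine setIntegral_mono_on (hsum.add hlin)
        (integrableOn_exp_neg_mul_add_rpow (by linarith) hx) measurableSet_Ioi fun s hs ↦ ?_
      have := rpow_add_rpow_add_mul_rpow_le_add_rpow hk (le_of_lt hs) hx
      rw [add_comm x s] at this
      nlinarith [Real.exp_pos (-s)]
    _ ≤ Real.exp x * Real.Gamma (k + 1) := integral_exp_neg_mul_add_rpow_le (by linarith) hx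
  linarith

/-- The square of the Bernstein norm `‖f‖_{P,B}`. It takes values in `ℝ≥0∞`, so that it is `∞`
when the defining integral diverges. -/
noncomputable def bernsteinNormSq {X : Type*} [MeasurableSpace X] (P : Measure X) (f : X → ℝ) :
    ℝ≥0∞ :=
  2 * ∫⁻ x, ENNReal.ofReal (Real.exp |f x| - 1 - |f x|) ∂P

theorem eLpNorm_sub_integral_le {X E : Type*} [MeasurableSpace X] [NormedAddCommGroup E]
    [NormedSpace ℝ E] {P : Measure X} [IsProbabilityMeasure P] {f : X → E} {q : ℝ≥0∞} (hq : 1 ≤ q)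
    (hf : AEStronglyMeasurable f P) :
    eLpNorm (fun x ↦ f x - ∫ y, f y ∂P) q P ≤ 2 * eLpNorm f q P := by
  have hmean : eLpNorm (fun _ ↦ ∫ y, f y ∂P) q P ≤ eLpNorm f q P := calc
    eLpNorm (fun _ ↦ ∫ y, f y ∂P) q P
    _ = ‖∫ y, f y ∂P‖ₑ := by
      simp [eLpNorm_const _ (zero_lt_one.trans_le hq).ne' (IsProbabilityMeasure.ne_zero P)]
    _ ≤ eLpNorm f 1 P := by
      rw [eLpNorm_one_eq_lintegral_enorm]
      exact enorm_integral_le_lintegral_enorm f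
    _ ≤ eLpNorm f q P := eLpNorm_le_eLpNorm_of_exponent_le hq hf
  calc eLpNorm (fun x ↦ f x - ∫ y, f y ∂P) q P
    _ ≤ eLpNorm f q P + eLpNorm (fun _ ↦ ∫ y, f y ∂P) q P :=
      eLpNorm_sub_le hf aestronglyMeasurable_const hq
    _ ≤ 2 * eLpNorm f q P := by rw [two_mul]; gcongr

theorem lintegral_ofReal_abs_rpow_eq_eLpNorm_rpow {X : Type*} [MeasurableSpace X] (P : Measure X)
    (f : X → ℝ) {k : ℝ} (hk : 0 < k) :
    ∫⁻ x, ENNReal.ofReal (|f x| ^ k) ∂P = eLpNorm f (ENNReal.ofReal k) P ^ k := by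
  have h := eLpNorm_nnreal_pow_eq_lintegral (f := f) (μ := P) (Real.toNNReal_pos.2 hk).ne'
  rw [Real.coe_toNNReal k hk.le] at h
  rw [ENNReal.ofReal, h]
  simp only [Real.enorm_eq_ofReal_abs, ENNReal.ofReal_rpow_of_nonneg (abs_nonneg _) hk.le]

theorem lintegral_abs_sub_integral_rpow_le {X : Type*} [MeasurableSpace X] {P : Measure X}
    [IsProbabilityMeasure P] {f : X → ℝ} (hf : AEStronglyMeasurable f P) {k : ℝ} (hk : 1 ≤ k) :
    ∫⁻ x, ENNReal.ofReal (|f x - ∫ y, f y ∂P| ^ k) ∂P ≤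
      2 ^ k * ∫⁻ x, ENNReal.ofReal (|f x| ^ k) ∂P := by
  have hk0 : 0 < k := by linarith
  rw [lintegral_ofReal_abs_rpow_eq_eLpNorm_rpow P _ hk0,
    lintegral_ofReal_abs_rpow_eq_eLpNorm_rpow P _ hk0, ← ENNReal.mul_rpow_of_nonneg _ _ hk0.le]
  gcongr
  exact eLpNorm_sub_integral_le (by simpa using hk) hf


theorem exp_abs_sub_one_sub_abs_nonneg (y : ℝ) : 0 ≤ Real.exp |y| - 1 - |y| := by
  linarith [Real.add_one_le_exp |y|]

theorem exp_abs_log_sub_of_le_one {r : ℝ} (hr : 0 < r) (hr1 : r ≤ 1) :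
    Real.exp |Real.log r| - 1 - |Real.log r| = r⁻¹ - 1 + Real.log r := by
  rw [abs_of_nonpos (Real.log_nonpos hr.le hr1), Real.exp_neg, Real.exp_log hr, sub_neg_eq_add]

theorem exp_abs_log_sub_le_sq {r : ℝ} (hr : 0 < r) (hr' : r⁻¹ ≤ 3 / 2) :
    Real.exp |Real.log r| - 1 - |Real.log r| ≤ (r - 1) ^ 2 := by
  rcases le_total 1 r with hr1 | hr1
  · rw [abs_of_nonneg (Real.log_nonneg hr1), Real.exp_log hr]
    calc r - 1 - Real.log r
      _ ≤ r - 1 - (1 - r⁻¹) := by gcongr; exact Real.one_sub_inv_le_log_of_pos hr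
      _ = (r - 1) ^ 2 * r⁻¹ := by field_simp
      _ ≤ (r - 1) ^ 2 := mul_le_of_le_one_right (sq_nonneg _) (inv_le_one_of_one_le₀ hr1)
  · have hr23 : 2 / 3 ≤ r := by
      have := (inv_le_comm₀ hr (by norm_num)).1 hr'
      norm_num at this
      exact this
    have hlog : 2 * (r⁻¹ - 1) / (r⁻¹ + 1) ≤ -Real.log r := by
      have := Real.le_log_one_add_of_nonneg (sub_nonneg.2 ((one_le_inv₀ hr).2 hr1))
      rw [← Real.log_inv]
      convert this using 2 <;> ring
    rw [exp_abs_log_sub_of_le_one hr hr1]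
    calc r⁻¹ - 1 + Real.log r
      _ ≤ r⁻¹ - 1 - 2 * (r⁻¹ - 1) / (r⁻¹ + 1) := by linarith
      _ = (r - 1) ^ 2 / (r * (1 + r)) := by field_simp; ring
      _ ≤ (r - 1) ^ 2 := div_le_self (sq_nonneg _) (by nlinarith)

theorem exp_abs_log_sub_le_sq_add {r δ : ℝ} (hr : 0 < r) (hδ : 0 ≤ δ) (hδ' : δ ≤ 1 / 2)
    (hrδ : 1 + δ ≤ r⁻¹) :
    Real.exp |Real.log r| - 1 - |Real.log r| ≤ (r - 1) ^ 2 + (r⁻¹ - 1) - δ := by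
  set s := (1 + δ)⁻¹
  have hs0 : 0 < s := by positivity
  have hs1 : s ≤ 1 := inv_le_one_of_one_le₀ (by linarith)
  have hsinv : s⁻¹ = 1 + δ := inv_inv _
  have hrs : r ≤ s := (le_inv_comm₀ (by linarith) hr).1 hrδ
  have hboundary := exp_abs_log_sub_le_sq hs0 (by linarith)
  have hlog := Real.log_le_log hr hrs
  have hsq : (s - 1) ^ 2 ≤ (r - 1) ^ 2 := by nlinarith
  rw [exp_abs_log_sub_of_le_one hs0 hs1] at hboundary
  rw [exp_abs_log_sub_of_le_one hr (hrs.trans hs1)]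
  linarith

theorem two_mul_exp_abs_log_sub_add_le {r δ M : ℝ} (hr : 0 < r) (hδ : 0 ≤ δ) (hδ' : δ ≤ 1 / 2)
    (hrδ : 1 + δ ≤ r⁻¹) (hM : 0 < M) :
    2 * (Real.exp |Real.log r| - 1 - |Real.log r|) + 2 * δ ≤
      (2 + M) * (r - 1) ^ 2 + M⁻¹ * r⁻¹ ^ 2 := by
  have hamgm : 2 * (r⁻¹ - 1) ≤ M * (r - 1) ^ 2 + M⁻¹ * r⁻¹ ^ 2 := by
    rw [← sub_nonneg]
    calc (0 : ℝ) ≤ M * (1 - r - M⁻¹ * r⁻¹) ^ 2 := by positivity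
      _ = M * (r - 1) ^ 2 + M⁻¹ * r⁻¹ ^ 2 - 2 * (r⁻¹ - 1) := by field_simp; ring
  linarith [exp_abs_log_sub_le_sq_add hr hδ hδ' hrδ]

section Bernstein

variable {X : Type*} [MeasurableSpace X] {P : Measure X}

theorem lintegral_abs_sub_integral_rpow_le_bernsteinNormSq [IsProbabilityMeasure P] {f : X → ℝ}
    (hf : AEStronglyMeasurable f P) {k : ℝ} (hk : 2 ≤ k) :
    ∫⁻ x, ENNReal.ofReal (|f x - ∫ y, f y ∂P| ^ k) ∂P ≤
      ENNReal.ofReal (2 ^ (k - 1) * Real.Gamma (k + 1)) * bernsteinNormSq P f := by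
  have hGamma : 0 < Real.Gamma (k + 1) := Real.Gamma_pos_of_pos (by linarith)
  calc ∫⁻ x, ENNReal.ofReal (|f x - ∫ y, f y ∂P| ^ k) ∂P
    _ ≤ 2 ^ k * ∫⁻ x, ENNReal.ofReal (|f x| ^ k) ∂P :=
      lintegral_abs_sub_integral_rpow_le hf (by linarith)
    _ ≤ 2 ^ k * ∫⁻ x, ENNReal.ofReal (Real.Gamma (k + 1)) *
          ENNReal.ofReal (Real.exp |f x| - 1 - |f x|) ∂P := by
      gcongr with x
      rw [← ENNReal.ofReal_mul hGamma.le]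
      exact ENNReal.ofReal_le_ofReal (rpow_le_Gamma_mul_exp_sub_one_sub hk (abs_nonneg _))
    _ = ENNReal.ofReal (2 ^ (k - 1) * Real.Gamma (k + 1)) * bernsteinNormSq P f := by
      have htwo : (2 : ℝ≥0∞) ^ k = ENNReal.ofReal (2 ^ (k - 1)) * 2 := by
        rw [← ENNReal.ofReal_ofNat 2, ENNReal.ofReal_rpow_of_pos two_pos,
          ← ENNReal.ofReal_mul (by positivity), ← Real.rpow_add_one two_ne_zero, sub_add_cancel]
      rw [lintegral_const_mul' _ _ ofReal_ne_top, htwo, bernsteinNormSq,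
        ENNReal.ofReal_mul (by positivity)]
      ring

theorem lintegral_abs_sub_integral_rpow_le_bernsteinNormSq_half [IsProbabilityMeasure P]
    {f : X → ℝ} (hf : AEStronglyMeasurable f P) {k : ℝ} (hk : 2 ≤ k) :
    ∫⁻ x, ENNReal.ofReal (|f x - ∫ y, f y ∂P| ^ k) ∂P ≤
      ENNReal.ofReal (2 ^ (2 * k - 1) * Real.Gamma (k + 1)) *
        bernsteinNormSq P (fun x ↦ f x / 2) := by
  have hscale (x : X) : |f x - ∫ y, f y ∂P| ^ k = 2 ^ k * |f x / 2 - ∫ y, f y / 2 ∂P| ^ k := by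
    rw [integral_div, ← sub_div, abs_div, abs_two, ← Real.mul_rpow two_pos.le (by positivity),
      mul_div_cancel₀ _ two_ne_zero]
  have hconst : (2 : ℝ) ^ (2 * k - 1) * Real.Gamma (k + 1) =
      2 ^ k * (2 ^ (k - 1) * Real.Gamma (k + 1)) := by
    rw [← mul_assoc, ← Real.rpow_add two_pos]
    ring_nf
  simp_rw [hscale, ENNReal.ofReal_mul (Real.rpow_nonneg two_pos.le k)]
  rw [lintegral_const_mul' _ _ ofReal_ne_top, hconst, ENNReal.ofReal_mul (by positivity), mul_assoc]
  gcongr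
  exact lintegral_abs_sub_integral_rpow_le_bernsteinNormSq (hf.mul_const 2⁻¹) hk

variable {r : X → ℝ}

theorem bernsteinNormSq_log_le_of_ae_inv_le (hpos : ∀ᵐ x ∂P, 0 < r x)
    (hinv : ∀ᵐ x ∂P, (r x)⁻¹ ≤ 3 / 2) :
    bernsteinNormSq P (fun x ↦ Real.log (r x)) ≤
      2 * ∫⁻ x, ENNReal.ofReal ((r x - 1) ^ 2) ∂P := by
  refine mul_le_mul_right (lintegral_mono_ae ?_) 2
  filter_upwards [hpos, hinv] with x hx hx'
  exact ENNReal.ofReal_le_ofReal (exp_abs_log_sub_le_sq hx hx')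

theorem measure_one_add_le_inv_le_lintegral_inv_sq (hr : Measurable r) {δ : ℝ} (hδ : 0 ≤ δ) :
    P {x | 1 + δ ≤ (r x)⁻¹} ≤
      ∫⁻ x in {x | 1 + δ ≤ (r x)⁻¹}, ENNReal.ofReal ((r x)⁻¹ ^ 2) ∂P := by
  rw [← setLIntegral_one]
  refine setLIntegral_mono' (measurableSet_le measurable_const hr.inv) fun x hx ↦ ?_
  have hx : 1 + δ ≤ (r x)⁻¹ := hx
  exact ENNReal.one_le_ofReal.2 (one_le_pow₀ (by linarith))

theorem bernsteinNormSq_log_add_le (hr : Measurable r) (hpos : ∀ᵐ x ∂P, 0 < r x) {δ M : ℝ}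
    (hδ : 0 ≤ δ) (hδ' : δ ≤ 1 / 2) (hM : 0 < M) :
    bernsteinNormSq P (fun x ↦ Real.log (r x)) +
        ENNReal.ofReal (2 * δ) * P {x | 1 + δ ≤ (r x)⁻¹} ≤
      ENNReal.ofReal (2 + M) * ∫⁻ x, ENNReal.ofReal ((r x - 1) ^ 2) ∂P +
        ENNReal.ofReal M⁻¹ *
          ∫⁻ x in {x | 1 + δ ≤ (r x)⁻¹}, ENNReal.ofReal ((r x)⁻¹ ^ 2) ∂P := by
  set A := {x | 1 + δ ≤ (r x)⁻¹}
  have hA : MeasurableSet A := measurableSet_le measurable_const hr.inv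
  rw [bernsteinNormSq, ← lintegral_const_mul' _ _ ofNat_ne_top,
    ← lintegral_const_mul' _ _ ofReal_ne_top, ← lintegral_const_mul' _ _ ofReal_ne_top,
    ← lintegral_indicator_const hA, ← lintegral_add_right _ (measurable_const.indicator hA),
    ← lintegral_indicator hA, ← lintegral_add_left (by fun_prop)]
  refine lintegral_mono_ae ?_
  filter_upwards [hpos] with x hx
  rw [← ENNReal.ofReal_ofNat 2, ← ENNReal.ofReal_mul two_pos.le,
    ← ENNReal.ofReal_mul (by positivity)]
  by_cases hxA : x ∈ A
  · rw [Set.indicator_of_mem hxA, Set.indicator_of_mem hxA, ← ENNReal.ofReal_mul (by positivity),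
      ← ENNReal.ofReal_add (by linarith [exp_abs_sub_one_sub_abs_nonneg (Real.log (r x))])
        (by positivity), ← ENNReal.ofReal_add (by positivity) (by positivity)]
    exact ENNReal.ofReal_le_ofReal (two_mul_exp_abs_log_sub_add_le hx hδ hδ' hxA hM)
  · rw [Set.indicator_of_notMem hxA, Set.indicator_of_notMem hxA, add_zero, add_zero]
    have hinv : (r x)⁻¹ < 1 + δ := not_le.1 hxA
    have := exp_abs_log_sub_le_sq hx (by linarith)
    exact ENNReal.ofReal_le_ofReal (by nlinarith [sq_nonneg (r x - 1)])

theorem bernsteinNormSq_log_le [IsFiniteMeasure P] (hr : Measurable r)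
    (hpos : ∀ᵐ x ∂P, 0 < r x) {δ M : ℝ} (hδ : 0 ≤ δ) (hδ' : δ ≤ 1 / 2) (hM : 0 ≤ M)
    (htail : ∫⁻ x in {x | 1 + δ ≤ (r x)⁻¹}, ENNReal.ofReal ((r x)⁻¹ ^ 2) ∂P ≤
      ENNReal.ofReal (2 * δ * M) * P {x | 1 + δ ≤ (r x)⁻¹}) :
    bernsteinNormSq P (fun x ↦ Real.log (r x)) ≤
      ENNReal.ofReal (2 + M) * ∫⁻ x, ENNReal.ofReal ((r x - 1) ^ 2) ∂P := by
  rcases hM.eq_or_lt with rfl | hM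
  · have hnull : P {x | 1 + δ ≤ (r x)⁻¹} = 0 := by
      simpa using (measure_one_add_le_inv_le_lintegral_inv_sq hr hδ).trans htail
    rw [add_zero, ENNReal.ofReal_ofNat]
    refine bernsteinNormSq_log_le_of_ae_inv_le hpos ?_
    filter_upwards [measure_eq_zero_iff_ae_notMem.1 hnull] with x hx
    have hinv : (r x)⁻¹ < 1 + δ := not_le.1 hx
    exact hinv.le.trans (by linarith)
  · refine ENNReal.le_of_add_le_add_right (a := ENNReal.ofReal (2 * δ) * P {x | 1 + δ ≤ (r x)⁻¹})
      (mul_ne_top ofReal_ne_top (measure_ne_top _ _))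
      ((bernsteinNormSq_log_add_le hr hpos hδ hδ' hM).trans ?_)
    have hcancel : ENNReal.ofReal M⁻¹ * ENNReal.ofReal (2 * δ * M) = ENNReal.ofReal (2 * δ) := by
      rw [← ENNReal.ofReal_mul (by positivity)]
      field_simp
    rw [← hcancel, mul_assoc]
    gcongr

theorem setLIntegral_le_ofReal_div_mul_measure {A : Set X} {g : X → ℝ≥0∞} {c M : ℝ} (hc : 0 < c)
    (h : P A = 0 ∨ ENNReal.ofReal c * ∫⁻ x in A, g x ∂P ≤ ENNReal.ofReal M * P A) :
    ∫⁻ x in A, g x ∂P ≤ ENNReal.ofReal (M / c) * P A := by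
  rcases h with hnull | hle
  · simp [Measure.restrict_eq_zero.2 hnull]
  · rw [ENNReal.ofReal_div_of_pos hc, ← ENNReal.mul_div_right_comm]
    exact (ENNReal.le_div_iff_mul_le (.inl (ENNReal.ofReal_pos.2 hc).ne')
      (.inl ofReal_ne_top)).2 (by rwa [mul_comm])

end Bernstein

theorem lintegral_sqrt_div_sub_one_sq_withDensity_le {X : Type*} [MeasurableSpace X]
    (μ : Measure X) {p q : X → ℝ} (hp : Measurable p) (hq : Measurable q) :
    ∫⁻ x, ENNReal.ofReal ((√(p x / q x) - 1) ^ 2)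
        ∂(μ.withDensity fun x ↦ ENNReal.ofReal (q x)) ≤
      ∫⁻ x, ENNReal.ofReal ((√(p x) - √(q x)) ^ 2) ∂μ := by
  rw [lintegral_withDensity_eq_lintegral_mul _ hq.ennreal_ofReal (by fun_prop)]
  refine lintegral_mono fun x ↦ ?_
  rcases le_or_gt (q x) 0 with hqx | hqx
  · simp [ENNReal.ofReal_of_nonpos hqx]
  · rw [Pi.mul_apply, ← ENNReal.ofReal_mul hqx.le, Real.sqrt_div' _ hqx.le]
    have hsqrt : √(q x) ≠ 0 := (Real.sqrt_pos.2 hqx).ne'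
    refine ENNReal.ofReal_le_ofReal (le_of_eq ?_)
    nth_rewrite 1 [← Real.sq_sqrt hqx.le]
    field_simp

theorem ae_pos_withDensity_ofReal {X : Type*} [MeasurableSpace X] (μ : Measure X) {q : X → ℝ}
    (hq : Measurable q) : ∀ᵐ x ∂(μ.withDensity fun x ↦ ENNReal.ofReal (q x)), 0 < q x := by
  rw [ae_withDensity_iff hq.ennreal_ofReal]
  exact .of_forall fun x hx ↦ ENNReal.ofReal_pos.1 (pos_iff_ne_zero.2 hx)

theorem bernsteinNormSq_half_log_ratio_le_hellinger {X : Type*} [MeasurableSpace X] {μ : Measure X}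
    {p p₀ : X → ℝ} (hp : Measurable p) (hp₀ : Measurable p₀) (hpnn : ∀ x, 0 ≤ p x)
    (hp₀nn : ∀ x, 0 ≤ p₀ x) {P₀ : Measure X} [IsFiniteMeasure P₀]
    (hP₀ : P₀ = μ.withDensity fun x ↦ ENNReal.ofReal (p₀ x)) (hzero : P₀ {x | p x = 0} = 0)
    {δ M : ℝ} (hδ : 0 ≤ δ) (hδ' : δ ≤ 1 / 2) (hM : 0 ≤ M)
    (htail : ∫⁻ x in {x | (1 + δ) ^ 2 ≤ p₀ x / p x}, ENNReal.ofReal (p₀ x / p x) ∂P₀ ≤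
      ENNReal.ofReal (2 * δ * M) * P₀ {x | (1 + δ) ^ 2 ≤ p₀ x / p x}) :
    bernsteinNormSq P₀ (fun x ↦ Real.log (p x / p₀ x) / 2) ≤
      ENNReal.ofReal (2 + M) * ∫⁻ x, ENNReal.ofReal ((√(p x) - √(p₀ x)) ^ 2) ∂μ := by
  have hpos : ∀ᵐ x ∂P₀, 0 < √(p x / p₀ x) := by
    have hp₀pos : ∀ᵐ x ∂P₀, 0 < p₀ x := hP₀ ▸ ae_pos_withDensity_ofReal μ hp₀
    filter_upwards [hp₀pos, measure_eq_zero_iff_ae_notMem.1 hzero] with x hx hx'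
    exact Real.sqrt_pos.2 (div_pos ((hpnn x).lt_of_ne' hx') hx)
  have hinv (x : X) : (√(p x / p₀ x))⁻¹ = √(p₀ x / p x) := by rw [← Real.sqrt_inv, inv_div]
  have hsq (x : X) : √(p₀ x / p x) ^ 2 = p₀ x / p x :=
    Real.sq_sqrt (div_nonneg (hp₀nn x) (hpnn x))
  have hle (x : X) : 1 + δ ≤ √(p₀ x / p x) ↔ (1 + δ) ^ 2 ≤ p₀ x / p x :=
    Real.le_sqrt' (by linarith)
  simp_rw [← Real.log_sqrt (div_nonneg (hpnn _) (hp₀nn _))]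
  refine (bernsteinNormSq_log_le (r := fun x ↦ √(p x / p₀ x)) (by fun_prop) hpos hδ hδ' hM
    ?_).trans (mul_le_mul_right ?_ _)
  · simpa only [hinv, hle, hsq] using htail
  · rw [hP₀]
    exact lintegral_sqrt_div_sub_one_sq_withDensity_le μ hp hp₀

theorem lintegral_abs_centered_log_ratio_rpow_le_hellinger_general
    {X : Type*} [MeasurableSpace X] (μ : Measure X)
    (p p₀ : X → ℝ) (hp : Measurable p) (hp₀ : Measurable p₀)
    (hpnn : ∀ x, 0 ≤ p x) (hp₀nn : ∀ x, 0 ≤ p₀ x)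
    (hp₀den : ∫⁻ x, ENNReal.ofReal (p₀ x) ∂μ = 1)
    (P₀ : Measure X) (hP₀ : P₀ = μ.withDensity fun x => ENNReal.ofReal (p₀ x))
    (hzero : P₀ {x | p x = 0} = 0)
    (M : ℝ) (hM : 0 ≤ M)
    (hMbound : ∃ c : ℝ, 1 ≤ c ∧
      (P₀ {x | (1 + 1 / (2 * c)) ^ 2 ≤ p₀ x / p x} = 0 ∨
        ENNReal.ofReal c *
            (∫⁻ x in {x | (1 + 1 / (2 * c)) ^ 2 ≤ p₀ x / p x},
              ENNReal.ofReal (p₀ x / p x) ∂P₀) ≤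
          ENNReal.ofReal M * P₀ {x | (1 + 1 / (2 * c)) ^ 2 ≤ p₀ x / p x}))
    (m : ℝ) (hm : m = ∫ x, Real.log (p x / p₀ x) ∂P₀)
    (k : ℝ) (hk : 2 ≤ k) :
    ∫⁻ x, ENNReal.ofReal (|Real.log (p x / p₀ x) - m| ^ k) ∂P₀ ≤
      ENNReal.ofReal ((2 : ℝ) ^ (2 * k - 1) * Real.Gamma (k + 1) * (2 + M)) *
        ∫⁻ x, ENNReal.ofReal ((Real.sqrt (p x) - Real.sqrt (p₀ x)) ^ 2) ∂μ := by
  obtain ⟨c, hc, htail⟩ := hMbound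
  have hc0 : 0 < c := by linarith
  have hprob : IsProbabilityMeasure P₀ := ⟨by simpa [hP₀] using hp₀den⟩
  have hmeas : Measurable fun x ↦ Real.log (p x / p₀ x) := (hp.div hp₀).log
  have hbernstein := bernsteinNormSq_half_log_ratio_le_hellinger hp hp₀ hpnn hp₀nn hP₀ hzero
    (δ := 1 / (2 * c)) (by positivity) (by gcongr; linarith) hM <| by
      convert setLIntegral_le_ofReal_div_mul_measure hc0 htail using 3
      field_simp
  have hmoment :=
    lintegral_abs_sub_integral_rpow_le_bernsteinNormSq_half hmeas.aestronglyMeasurable (P := P₀) hk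
  rw [hm, ENNReal.ofReal_mul (by positivity), mul_assoc]
  exact hmoment.trans (by gcongr)

/-- Under the stated conditions, with `m := ∫ log(p/p₀) dP₀`, for every real `k ≥ 2`,
`∫ |log(p/p₀) - m|^k dP₀ ≤ 2^{2k-1} Γ(k+1) (2 + M) h(p,p₀)²`. -/
theorem lintegral_abs_centered_log_ratio_rpow_le_hellinger
    {X : Type*} [MeasurableSpace X] (μ : Measure X) [SigmaFinite μ]
    (p p₀ : X → ℝ) (hp : Measurable p) (hp₀ : Measurable p₀)
    (hpnn : ∀ x, 0 ≤ p x) (hp₀nn : ∀ x, 0 ≤ p₀ x)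
    (hpden : ∫⁻ x, ENNReal.ofReal (p x) ∂μ = 1)
    (hp₀den : ∫⁻ x, ENNReal.ofReal (p₀ x) ∂μ = 1)
    (P₀ : Measure X) (hP₀ : P₀ = μ.withDensity fun x => ENNReal.ofReal (p₀ x))
    (hzero : P₀ {x | p x = 0} = 0)
    (hfin : ∫⁻ x, ENNReal.ofReal (p₀ x / p x) ∂P₀ < ⊤)
    (M : ℝ) (hM : 0 ≤ M)
    (hMbound : ∃ c : ℝ, 1 ≤ c ∧
      (P₀ {x | (1 + 1 / (2 * c)) ^ 2 ≤ p₀ x / p x} = 0 ∨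
        ENNReal.ofReal c *
            (∫⁻ x in {x | (1 + 1 / (2 * c)) ^ 2 ≤ p₀ x / p x},
              ENNReal.ofReal (p₀ x / p x) ∂P₀) ≤
          ENNReal.ofReal M * P₀ {x | (1 + 1 / (2 * c)) ^ 2 ≤ p₀ x / p x}))
    (hint : Integrable (fun x => Real.log (p x / p₀ x)) P₀)
    (m : ℝ) (hm : m = ∫ x, Real.log (p x / p₀ x) ∂P₀)
    (k : ℝ) (hk : 2 ≤ k) :
    ∫⁻ x, ENNReal.ofReal (|Real.log (p x / p₀ x) - m| ^ k) ∂P₀ ≤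
      ENNReal.ofReal ((2 : ℝ) ^ (2 * k - 1) * Real.Gamma (k + 1) * (2 + M)) *
        ∫⁻ x, ENNReal.ofReal ((Real.sqrt (p x) - Real.sqrt (p₀ x)) ^ 2) ∂μ := by
  exact lintegral_abs_centered_log_ratio_rpow_le_hellinger_general μ p p₀ hp hp₀ hpnn hp₀nn hp₀den
    P₀ hP₀ hzero M hM hMbound m hm k hk
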